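/- arXiv:1501.00363 — 2 statements merged into one kernel-verified Lean document; each statement's English description precedes it below -/
import Mathlib

section
/- Let d ≥ 3 be an integer and ν < 0. Then lim_{a→∞} e^{−a(d−1)} · Σ_{n∈ℕ^d} (Π_{i=1}^d a^{n_i}/n_i!) · exp(ν · n_1 n_2 ⋯ n_d) = d. -/
open Filter

/-!
A multi-index with a zero coordinate contributes its full Poisson weight; these contributions sum to
`exp a ^ d - (exp a - 1) ^ d`, which after scaling is `∑ k < d, (1 - exp (-a)) ^ k → d`.

On the other multi-indices put `q = exp ν < 1` and keep only two coordinates `m, n ≥ 1` of the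
product, so that the interaction factor is at most `q ^ (m * n)`. Fix `K` with `q + q ^ K < 1`.
Each of the finitely many `m < K` contributes at most `a ^ m / m! * exp (a * q ^ m)`, while `m ≥ K`
gives `m * n ≥ m + K * (n - 1)` and hence a total of at most `q ^ (-K) * exp (a * (q + q ^ K))`.
All of this is `o(exp a)`, and `exp a` is the scale left after the other `d - 2` coordinates are
summed out.
-/

theorem summable_norm_and_hasSum_pi_prod_fin {R : Type*} [NormedCommRing R] [CompleteSpace R]
    {d : ℕ} {κ : Fin d → Type*} {f : ∀ i, κ i → R} {s : Fin d → R}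
    (hf : ∀ i, Summable fun m ↦ ‖f i m‖) (hs : ∀ i, HasSum (f i) (s i)) :
    (Summable fun n : ∀ i, κ i ↦ ‖∏ i, f i (n i)‖) ∧
      HasSum (fun n : ∀ i, κ i ↦ ∏ i, f i (n i)) (∏ i, s i) := by
  induction d with
  | zero =>
    simp only [Finset.univ_eq_empty, Finset.prod_empty]
    exact ⟨(hasSum_unique _).summable, hasSum_unique _⟩
  | succ d ih =>
    let g : (∀ i : Fin d, κ i.succ) → R := fun n ↦ ∏ i, f i.succ (n i)
    obtain ⟨h_norm, h_sum⟩ : (Summable fun n ↦ ‖g n‖) ∧ HasSum g (∏ i : Fin d, s i.succ) :=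
      ih (fun i ↦ hf i.succ) fun i ↦ hs i.succ
    have h_cons (x : κ 0 × ∀ i : Fin d, κ i.succ) :
        ∏ i, f i (Fin.consEquiv κ x i) = f 0 x.1 * g x.2 :=
      Fin.prod_univ_succ _
    rw [← (Fin.consEquiv κ).summable_iff, ← (Fin.consEquiv κ).hasSum_iff, Fin.prod_univ_succ]
    simp only [Function.comp_def, h_cons]
    exact ⟨(hf 0).mul_norm h_norm,
      (hs 0).mul h_sum (summable_mul_of_summable_norm (hf 0) h_norm)⟩

theorem hasSum_pi_prod {ι R : Type*} [Fintype ι] {κ : ι → Type*}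
    [NormedCommRing R] [CompleteSpace R] {f : ∀ i, κ i → R} {s : ι → R}
    (hf : ∀ i, Summable fun m ↦ ‖f i m‖) (hs : ∀ i, HasSum (f i) (s i)) :
    HasSum (fun n : ∀ i, κ i ↦ ∏ i, f i (n i)) (∏ i, s i) := by
  let e := (Fintype.equivFin ι).symm
  rw [← (Equiv.piCongrLeft κ e).hasSum_iff, ← e.prod_comp s]
  simpa only [Function.comp_def, ← e.prod_comp, Equiv.piCongrLeft_apply_apply] using
    (summable_norm_and_hasSum_pi_prod_fin (fun i ↦ hf (e i)) fun i ↦ hs (e i)).2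

theorem prod_eq_mul_mul_pow {ι M : Type*} [Fintype ι] [CommMonoid M] {i j : ι} (hij : i ≠ j)
    {g : ι → M} {z : M} (hg : ∀ k, k ≠ i → k ≠ j → g k = z) :
    ∏ k, g k = g i * g j * z ^ (Fintype.card ι - 2) := by
  classical
  rw [← Finset.prod_mul_prod_compl {i, j} g, Finset.prod_pair hij,
    Finset.prod_congr rfl (g := fun _ ↦ z), Finset.prod_const, Finset.card_compl,
    Finset.card_pair hij]
  intro k hk
  simp only [Finset.mem_compl, Finset.mem_insert, Finset.mem_singleton, not_or] at hk
  exact hg k hk.1 hk.2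

section PoissonWeight

variable {ι : Type*} [Fintype ι]

/-- The weight of the multi-index `n` under independent Poisson variables of parameter `a`, without
the normalizing factor `exp (-a)` of each coordinate. -/
noncomputable def poissonWeight (a : ℝ) (n : ι → ℕ) : ℝ :=
  ∏ i, a ^ n i / ((n i).factorial : ℝ)

theorem poissonWeight_nonneg {a : ℝ} (ha : 0 ≤ a) (n : ι → ℕ) : 0 ≤ poissonWeight a n :=
  Finset.prod_nonneg fun _ _ ↦ by positivity

theorem hasSum_pow_div_factorial_mul_pow (a x : ℝ) :
    HasSum (fun m : ℕ ↦ a ^ m / (m.factorial : ℝ) * x ^ m) (Real.exp (a * x)) := by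
  simpa only [mul_pow, mul_div_right_comm, Real.exp_eq_exp_ℝ] using
    NormedSpace.expSeries_div_hasSum_exp (a * x)

theorem hasSum_poissonWeight_mul_prod {a : ℝ} {u : ι → ℕ → ℝ} {s : ι → ℝ}
    (hu : ∀ i, HasSum (fun m : ℕ ↦ a ^ m / (m.factorial : ℝ) * u i m) (s i)) :
    HasSum (fun n ↦ poissonWeight a n * ∏ i, u i (n i)) (∏ i, s i) := by
  simpa only [poissonWeight, ← Finset.prod_mul_distrib] using
    hasSum_pi_prod (fun i ↦ (hu i).summable.norm) hu

theorem hasSum_poissonWeight (a : ℝ) :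
    HasSum (poissonWeight (ι := ι) a) (Real.exp a ^ Fintype.card ι) := by
  have h := hasSum_poissonWeight_mul_prod fun _ : ι ↦ hasSum_pow_div_factorial_mul_pow a 1
  simpa using h

theorem hasSum_poissonWeight_mul_mul {i j : ι} (hij : i ≠ j) {a s t : ℝ} {u v : ℕ → ℝ}
    (hu : HasSum (fun m : ℕ ↦ a ^ m / (m.factorial : ℝ) * u m) s)
    (hv : HasSum (fun m : ℕ ↦ a ^ m / (m.factorial : ℝ) * v m) t) :
    HasSum (fun n ↦ poissonWeight a n * (u (n i) * v (n j)))
      (Real.exp a ^ (Fintype.card ι - 2) * (s * t)) := by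
  classical
  let w : ι → ℕ → ℝ := fun k ↦ if k = i then u else if k = j then v else fun _ ↦ 1
  let σ : ι → ℝ := fun k ↦ if k = i then s else if k = j then t else Real.exp a
  have hw (k : ι) : HasSum (fun m : ℕ ↦ a ^ m / (m.factorial : ℝ) * w k m) (σ k) := by
    unfold w σ
    split_ifs
    · exact hu
    · exact hv
    · simpa using hasSum_pow_div_factorial_mul_pow a 1
  have hw_prod (n : ι → ℕ) : ∏ k, w k (n k) = u (n i) * v (n j) := by
    rw [prod_eq_mul_mul_pow hij (z := 1) fun k hi hj ↦ by simp [w, hi, hj]]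
    simp [w, hij.symm]
  have hσ_prod : ∏ k, σ k = Real.exp a ^ (Fintype.card ι - 2) * (s * t) := by
    rw [prod_eq_mul_mul_pow hij (z := Real.exp a) fun k hi hj ↦ by simp [σ, hi, hj]]
    simp [σ, hij.symm, mul_comm]
  simpa only [hw_prod, hσ_prod] using hasSum_poissonWeight_mul_prod hw

theorem hasSum_poissonWeight_boundary (a : ℝ) :
    HasSum (fun n : ι → ℕ ↦ if ∏ i, n i = 0 then poissonWeight a n else 0)
      (Real.exp a ^ Fintype.card ι - (Real.exp a - 1) ^ Fintype.card ι) := by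
  have h_pos : HasSum (fun m : ℕ ↦ a ^ m / (m.factorial : ℝ) * (1 - 0 ^ m)) (Real.exp a - 1) := by
    simpa [mul_sub] using
      (hasSum_pow_div_factorial_mul_pow a 1).sub (hasSum_pow_div_factorial_mul_pow a 0)
  have h_term (n : ι → ℕ) : poissonWeight a n - poissonWeight a n * ∏ i, (1 - 0 ^ n i) =
      if ∏ i, n i = 0 then poissonWeight a n else 0 := by
    split_ifs with hn
    · obtain ⟨i, -, hi⟩ := Finset.prod_eq_zero_iff.mp hn
      rw [Finset.prod_eq_zero (Finset.mem_univ i) (by simp [hi]), mul_zero, sub_zero]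
    · rw [Finset.prod_eq_one fun i hi ↦ by simp [Finset.prod_ne_zero_iff.mp hn i hi], mul_one,
        sub_self]
  have h := (hasSum_poissonWeight a).sub (hasSum_poissonWeight_mul_prod fun _ : ι ↦ h_pos)
  simpa only [h_term, Finset.prod_const, Finset.card_univ] using h

/-- A majorant of `q ^ (m * n)` for `m, n ≥ 1`, written as a finite sum of products `u m * v n` so
that its sums against `poissonWeight` are explicit. The cutoff `K` is meant to be fixed, large
enough for `q + q ^ K < 1`. -/
noncomputable def powMulMajorant (q : ℝ) (K m n : ℕ) : ℝ :=
  ∑ k ∈ Finset.Ico 1 K, (if m = k then 1 else 0) * (q ^ k) ^ n + (q ^ K)⁻¹ * (q ^ m * (q ^ K) ^ n)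

/-- The sum of `a ^ (m + n) / (m! n!) * powMulMajorant q K m n` over all `m, n`. -/
noncomputable def powMulMajorantSum (q : ℝ) (K : ℕ) (a : ℝ) : ℝ :=
  ∑ k ∈ Finset.Ico 1 K, a ^ k / (k.factorial : ℝ) * Real.exp (a * q ^ k) +
    (q ^ K)⁻¹ * (Real.exp (a * q) * Real.exp (a * q ^ K))

theorem powMulMajorant_nonneg {q : ℝ} (hq : 0 ≤ q) (K m n : ℕ) : 0 ≤ powMulMajorant q K m n := by
  unfold powMulMajorant
  positivity

theorem pow_mul_le_powMulMajorant {q : ℝ} (hq₀ : 0 < q) (hq₁ : q ≤ 1) {m n : ℕ} (hm : m ≠ 0)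
    (hn : n ≠ 0) (K : ℕ) : q ^ (m * n) ≤ powMulMajorant q K m n := by
  unfold powMulMajorant
  obtain hmK | hKm := lt_or_ge m K
  · refine le_add_of_le_of_nonneg ?_ (by positivity)
    simp [← pow_mul, Nat.one_le_iff_ne_zero.mpr hm, hmK]
  · refine le_add_of_nonneg_of_le (by positivity) ?_
    -- This is `(m - K) * (n - 1) ≥ 0`.
    have h_exponent : m + K * n ≤ K + m * n := by
      obtain ⟨n, rfl⟩ := Nat.exists_eq_succ_of_ne_zero hn
      nlinarith
    rw [le_inv_mul_iff₀ (by positivity), ← pow_add, ← pow_mul, ← pow_add]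
    exact pow_le_pow_of_le_one hq₀.le hq₁ h_exponent

theorem hasSum_poissonWeight_mul_powMulMajorant {i j : ι} (hij : i ≠ j) (q : ℝ) (K : ℕ) (a : ℝ) :
    HasSum (fun n ↦ poissonWeight a n * powMulMajorant q K (n i) (n j))
      (Real.exp a ^ (Fintype.card ι - 2) * powMulMajorantSum q K a) := by
  have h_single (k : ℕ) :
      HasSum (fun m : ℕ ↦ a ^ m / (m.factorial : ℝ) * if m = k then 1 else 0)
        (a ^ k / (k.factorial : ℝ)) := by
    simpa using hasSum_single (f := fun m : ℕ ↦ a ^ m / (m.factorial : ℝ) * if m = k then 1 else 0)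
      k fun m hm ↦ by simp [hm]
  have h_small := hasSum_sum (s := Finset.Ico 1 K) fun k _ ↦
    hasSum_poissonWeight_mul_mul hij (h_single k) (hasSum_pow_div_factorial_mul_pow a (q ^ k))
  have h_large := (hasSum_poissonWeight_mul_mul hij (hasSum_pow_div_factorial_mul_pow a q)
    (hasSum_pow_div_factorial_mul_pow a (q ^ K))).mul_left (q ^ K)⁻¹
  simpa only [powMulMajorant, powMulMajorantSum, mul_add, Finset.mul_sum,
    mul_left_comm (q ^ K)⁻¹] using h_small.add h_large

theorem tendsto_exp_neg_mul_powMulMajorantSum {q : ℝ} (hq₀ : 0 ≤ q) (hq₁ : q < 1) {K : ℕ}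
    (hK : q ^ K < 1 - q) :
    Tendsto (fun a ↦ Real.exp (-a) * powMulMajorantSum q K a) atTop (nhds 0) := by
  have h_decay (k : ℕ) {b : ℝ} (hb : 0 < b) :
      Tendsto (fun a : ℝ ↦ a ^ k * Real.exp (-b * a)) atTop (nhds 0) := by
    simpa using tendsto_rpow_mul_exp_neg_mul_atTop_nhds_zero k b hb
  have h_small (k : ℕ) (hk : k ∈ Finset.Ico 1 K) :
      Tendsto (fun a : ℝ ↦ (k.factorial : ℝ)⁻¹ * (a ^ k * Real.exp (-(1 - q ^ k) * a))) atTop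
        (nhds 0) := by
    have hqk : q ^ k < 1 :=
      pow_lt_one₀ hq₀ hq₁ (Nat.one_le_iff_ne_zero.mp (Finset.mem_Ico.mp hk).1)
    simpa using (h_decay k (sub_pos.mpr hqk)).const_mul (k.factorial : ℝ)⁻¹
  have h_large := (h_decay 0 (b := 1 - q - q ^ K) (by linarith)).const_mul (q ^ K)⁻¹
  have h_total := (tendsto_finsetSum _ h_small).add h_large
  simp only [Finset.sum_const_zero, mul_zero, add_zero] at h_total
  refine h_total.congr fun a ↦ ?_
  rw [powMulMajorantSum, mul_add, Finset.mul_sum]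
  congr 1
  · refine Finset.sum_congr rfl fun k _ ↦ ?_
    rw [show -(1 - q ^ k) * a = -a + a * q ^ k by ring, Real.exp_add]
    ring
  · rw [show -(1 - q - q ^ K) * a = -a + (a * q + a * q ^ K) by ring, Real.exp_add, Real.exp_add]
    ring

theorem pow_prod_le_powMulMajorant {i j : ι} (hij : i ≠ j) {q : ℝ} (hq₀ : 0 < q) (hq₁ : q ≤ 1)
    {n : ι → ℕ} (hn : ∏ k, n k ≠ 0) (K : ℕ) :
    q ^ ∏ k, n k ≤ powMulMajorant q K (n i) (n j) := by
  classical
  have hn_pos (k : ι) : n k ≠ 0 := Finset.prod_ne_zero_iff.mp hn k (Finset.mem_univ k)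
  have h_dvd : n i * n j ∣ ∏ k, n k := by
    rw [← Finset.prod_pair hij]
    exact Finset.prod_dvd_prod_of_subset _ _ _ (Finset.subset_univ _)
  calc
    q ^ ∏ k, n k ≤ q ^ (n i * n j) :=
      pow_le_pow_of_le_one hq₀.le hq₁ (Nat.le_of_dvd (Nat.pos_of_ne_zero hn) h_dvd)
    _ ≤ powMulMajorant q K (n i) (n j) :=
      pow_mul_le_powMulMajorant hq₀ hq₁ (hn_pos i) (hn_pos j) K

theorem tsum_poissonWeight_mul_pow_prod_mem_Icc {i j : ι} (hij : i ≠ j) {q : ℝ} (hq₀ : 0 < q)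
    (hq₁ : q ≤ 1) (K : ℕ) {a : ℝ} (ha : 0 ≤ a) :
    ∑' n : ι → ℕ, poissonWeight a n * q ^ ∏ i, n i ∈
      Set.Icc (Real.exp a ^ Fintype.card ι - (Real.exp a - 1) ^ Fintype.card ι)
        (Real.exp a ^ Fintype.card ι - (Real.exp a - 1) ^ Fintype.card ι +
          Real.exp a ^ (Fintype.card ι - 2) * powMulMajorantSum q K a) := by
  have h_lower (n : ι → ℕ) : (if ∏ i, n i = 0 then poissonWeight a n else 0) ≤
      poissonWeight a n * q ^ ∏ i, n i := by
    split_ifs with hn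
    · simp [hn]
    · have := poissonWeight_nonneg ha n
      positivity
  have h_upper (n : ι → ℕ) : poissonWeight a n * q ^ ∏ i, n i ≤
      (if ∏ i, n i = 0 then poissonWeight a n else 0) +
        poissonWeight a n * powMulMajorant q K (n i) (n j) := by
    have hw := poissonWeight_nonneg ha n
    split_ifs with hn
    · have := powMulMajorant_nonneg hq₀.le K (n i) (n j)
      simpa [hn] using mul_nonneg hw this
    · rw [zero_add]
      exact mul_le_mul_of_nonneg_left (pow_prod_le_powMulMajorant hij hq₀ hq₁ hn K) hw
  have h_boundary := hasSum_poissonWeight_boundary (ι := ι) a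
  have h_majorant := h_boundary.add (hasSum_poissonWeight_mul_powMulMajorant hij q K a)
  have h_summable : Summable fun n : ι → ℕ ↦ poissonWeight a n * q ^ ∏ i, n i :=
    h_majorant.summable.of_nonneg_of_le
      (fun n ↦ mul_nonneg (poissonWeight_nonneg ha n) (by positivity)) h_upper
  exact ⟨hasSum_le h_lower h_boundary h_summable.hasSum,
    hasSum_le h_upper h_summable.hasSum h_majorant⟩

end PoissonWeight

theorem exp_mul_exp_pow_sub_pow (d : ℕ) (a : ℝ) :
    Real.exp (-a * ((d : ℝ) - 1)) * (Real.exp a ^ d - (Real.exp a - 1) ^ d) =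
      ∑ k ∈ Finset.range d, (1 - Real.exp (-a)) ^ k := by
  have h_inv : Real.exp (-a) * Real.exp a = 1 := by
    rw [← Real.exp_add, neg_add_cancel, Real.exp_zero]
  have h_factor : Real.exp (-a * ((d : ℝ) - 1)) = Real.exp a * Real.exp (-a) ^ d := by
    rw [← Real.exp_nat_mul, ← Real.exp_add]
    ring_nf
  calc
    _ = Real.exp a *
        ((Real.exp (-a) * Real.exp a) ^ d - (Real.exp (-a) * (Real.exp a - 1)) ^ d) := by
      rw [h_factor, mul_pow, mul_pow]
      ring
    _ = Real.exp a * (1 - (1 - Real.exp (-a)) ^ d) := by rw [mul_sub_one, h_inv, one_pow]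
    _ = Real.exp a * (Real.exp (-a) * ∑ k ∈ Finset.range d, (1 - Real.exp (-a)) ^ k) := by
      rw [← mul_neg_geom_sum, sub_sub_cancel]
    _ = _ := by rw [← mul_assoc, mul_comm (Real.exp a), h_inv, one_mul]

theorem tendsto_exp_mul_exp_pow_sub_pow (d : ℕ) :
    Tendsto (fun a ↦ Real.exp (-a * ((d : ℝ) - 1)) * (Real.exp a ^ d - (Real.exp a - 1) ^ d))
      atTop (nhds d) := by
  have h_base : Tendsto (fun a ↦ 1 - Real.exp (-a)) atTop (nhds 1) := by
    simpa using Real.tendsto_exp_neg_atTop_nhds_zero.const_sub 1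
  simp only [exp_mul_exp_pow_sub_pow]
  simpa using tendsto_finsetSum (Finset.range d) fun k _ ↦ h_base.pow k

theorem denominator_series_limit_general {ι : Type*} [Fintype ι] [Nontrivial ι] {ν : ℝ}
    (hν : ν < 0) :
    Tendsto (fun a : ℝ =>
        Real.exp (-a * ((Fintype.card ι : ℝ) - 1)) *
          ∑' n : ι → ℕ,
            (∏ i, a ^ (n i) / ((n i).factorial : ℝ)) * Real.exp (ν * ∏ i, (n i : ℝ)))
      atTop (nhds (Fintype.card ι : ℝ)) := by
  obtain ⟨i, j, hij⟩ := exists_pair_ne ι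
  have hq₁ : Real.exp ν < 1 := Real.exp_lt_one_iff.mpr hν
  obtain ⟨K, hK⟩ := exists_pow_lt_of_lt_one (sub_pos.mpr hq₁) hq₁
  have h_rewrite (a : ℝ) (n : ι → ℕ) :
      (∏ i, a ^ (n i) / ((n i).factorial : ℝ)) * Real.exp (ν * ∏ i, (n i : ℝ)) =
        poissonWeight a n * Real.exp ν ^ ∏ i, n i := by
    rw [poissonWeight, ← Real.exp_nat_mul, Nat.cast_prod, mul_comm ν]
  have h_scale (a : ℝ) : Real.exp (-a * ((Fintype.card ι : ℝ) - 1)) *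
      Real.exp a ^ (Fintype.card ι - 2) = Real.exp (-a) := by
    rw [← Real.exp_nat_mul, ← Real.exp_add, Nat.cast_sub Fintype.one_lt_card]
    push_cast
    ring_nf
  have h_boundary := tendsto_exp_mul_exp_pow_sub_pow (Fintype.card ι)
  have h_upper := h_boundary.add
    (tendsto_exp_neg_mul_powMulMajorantSum (Real.exp_pos ν).le hq₁ hK)
  simp only [add_zero, ← h_scale, mul_assoc, ← mul_add] at h_upper
  have h_bounds (a : ℝ) (ha : 0 ≤ a) :=
    tsum_poissonWeight_mul_pow_prod_mem_Icc hij (Real.exp_pos ν) hq₁.le K ha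
  simp only [h_rewrite]
  refine tendsto_of_tendsto_of_tendsto_of_le_of_le' h_boundary h_upper ?_ ?_
  all_goals filter_upwards [eventually_ge_atTop 0] with a ha
  · exact mul_le_mul_of_nonneg_left (h_bounds a ha).1 (Real.exp_pos _).le
  · exact mul_le_mul_of_nonneg_left (h_bounds a ha).2 (Real.exp_pos _).le

/-- `e^{-a(d-1)} Σ_{n∈ℕ^d} (Π a^{n_i}/n_i!) exp(ν n_1⋯n_d) → d` as `a → ∞`. -/
theorem denominator_series_limit
    (d : ℕ) (hd : 3 ≤ d) (ν : ℝ) (hν : ν < 0) :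
    Tendsto (fun a : ℝ =>
        Real.exp (-a * ((d : ℝ) - 1)) *
          ∑' n : Fin d → ℕ,
            (∏ i, a ^ (n i) / ((n i).factorial : ℝ)) * Real.exp (ν * ∏ i, (n i : ℝ)))
      atTop (nhds (d : ℝ)) := by
  have : Nontrivial (Fin d) := Fin.nontrivial_iff_two_le.mpr (by lia)
  simpa only [Fintype.card_fin] using denominator_series_limit_general (ι := Fin d) hν
end

section
/- Let d ≥ 3 and 1 ≤ k ≤ d−1 be integers and ν < 0. For n ∈ ℕ^d define Q_{d−k,d}(n) = Σ_{F⊆{1,…,d−k}} Π_{l∈{1,…,d}∖F} n_l, where the sum is over all subsets F of {1,…,d−k} (including the empty set). Then lim_{a→∞} e^{−a(d−1)} · Σ_{n∈ℕ^d} (Π_{i=1}^d a^{n_i}/n_i!) · exp(ν · Q_{d−k,d}(n)) = k. -/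
open Filter

/-!
After multiplication by `e^{-ad}`, the series is `𝔼 e^{νQ(N)}` for independent Poisson variables
`N_i` of parameter `a`, so the claim is `e^a 𝔼 e^{νQ(N)} → k`. The event `Q = 0` says that one of
`k` of the `N_i` vanishes; it contributes `e^a (1 - (1 - e^{-a})^k) → k`. Where `Q ≠ 0`, one has
`Q ≥ N_i N_j`, `Q ≥ N_i` and `Q ≥ N_j` for any `i ≠ j`. Fix a small `δ > 0`. If both `N_i` and `N_j`
are at least `δa`, then `e^{νQ} ≤ e^{νδ²a²}`. If `N_i ≤ δa`, an event of probability close to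
`e^{-a}` on the exponential scale, then `e^{νQ} ≤ e^{νN_j}`, and the independent factor
`𝔼 e^{νN_j} = e^{-a(1 - e^ν)}` makes the contribution `o(e^{-a})`.
-/

open Finset MeasureTheory ProbabilityTheory
open scoped NNReal Topology

section Combinatorics

theorem sum_powerset_prod_sdiff {ι R : Type*} [DecidableEq ι] [CommSemiring R] {s T : Finset ι}
    (hT : T ⊆ s) (x : ι → R) :
    ∑ F ∈ T.powerset, ∏ l ∈ s \ F, x l = ∏ l ∈ s, ((if l ∈ T then 1 else 0) + x l) := by
  have powerset_eq : T.powerset = {F ∈ s.powerset | ∀ l ∈ F, l ∈ T} := by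
    ext F
    simp only [mem_filter, mem_powerset]
    exact ⟨fun h => ⟨h.trans hT, h⟩, And.right⟩
  simp only [prod_add, prod_ite_zero, prod_const_one, ite_mul, one_mul, zero_mul, powerset_eq,
    sum_filter]

variable {ι : Type*} [Fintype ι] [DecidableEq ι]

/-- The quantity `Q_{d-k,d}(n)`, with an arbitrary set `T` of indices in place of `{1, …, d-k}`. -/
def complProdSum (T : Finset ι) (n : ι → ℕ) : ℕ :=
  ∑ F ∈ T.powerset, ∏ l ∈ univ \ F, n l

variable {T : Finset ι} {n : ι → ℕ}

theorem complProdSum_eq_prod (T : Finset ι) (n : ι → ℕ) :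
    complProdSum T n = ∏ l, ((if l ∈ T then 1 else 0) + n l) :=
  sum_powerset_prod_sdiff (subset_univ T) n

theorem complProdSum_ne_zero_iff : complProdSum T n ≠ 0 ↔ ∀ l ∈ Tᶜ, n l ≠ 0 := by
  simp [complProdSum_eq_prod, prod_ne_zero_iff]

theorem le_complProdSum (hn : complProdSum T n ≠ 0) (i : ι) : n i ≤ complProdSum T n := by
  have dvd : (if i ∈ T then 1 else 0) + n i ∣ complProdSum T n :=
    complProdSum_eq_prod T n ▸ dvd_prod_of_mem _ (mem_univ i)
  exact le_of_add_le_right (Nat.le_of_dvd (Nat.pos_of_ne_zero hn) dvd)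

theorem mul_le_complProdSum (hn : complProdSum T n ≠ 0) {i j : ι} (hij : i ≠ j) :
    n i * n j ≤ complProdSum T n := by
  have dvd : ((if i ∈ T then 1 else 0) + n i) * ((if j ∈ T then 1 else 0) + n j) ∣
      complProdSum T n := by
    rw [complProdSum_eq_prod, ← prod_pair (f := fun l => (if l ∈ T then 1 else 0) + n l) hij]
    exact prod_dvd_prod_of_subset _ _ _ (subset_univ _)
  calc n i * n j ≤ _ := Nat.mul_le_mul (Nat.le_add_left _ _) (Nat.le_add_left _ _)
    _ ≤ complProdSum T n := Nat.le_of_dvd (Nat.pos_of_ne_zero hn) dvd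

end Combinatorics

section PointwiseBound

variable {ν s t : ℝ}

theorem exp_mul_le_of_mul_le {u v P : ℝ} (hν : ν ≤ 0) (hs : 0 ≤ s) (ht : 0 ≤ t)
    (hu : u ≤ P) (hv : v ≤ P) (huv : u * v ≤ P) :
    Real.exp (ν * P) ≤ Real.exp (ν * t ^ 2) +
      Real.exp (s * t) * (Real.exp (ν * u) * Real.exp (-s * v) +
        Real.exp (ν * v) * Real.exp (-s * u)) := by
  -- Chernoff: `x ≤ t` is encoded by the factor `exp (s * (t - x)) ≥ 1`.
  have small {x y : ℝ} (hx : x ≤ t) (hy : y ≤ P) :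
      Real.exp (ν * P) ≤ Real.exp (s * t) * (Real.exp (ν * y) * Real.exp (-s * x)) := by
    rw [← Real.exp_add, ← Real.exp_add, Real.exp_le_exp]
    have := mul_le_mul_of_nonpos_left hy hν
    have := mul_le_mul_of_nonneg_left hx hs
    linarith
  rcases le_total v t with hvt | hvt
  · grw [small hvt hu, mul_add, ← add_assoc]
    exact le_add_of_le_of_nonneg (le_add_of_nonneg_left (by positivity)) (by positivity)
  rcases le_total u t with hut | hut
  · grw [small hut hv, mul_add, ← add_assoc]
    exact le_add_of_nonneg_left (by positivity)
  · have sq_le : t ^ 2 ≤ P := by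
      grw [sq, ← huv]
      exact mul_le_mul hut hvt ht (ht.trans hut)
    grw [mul_le_mul_of_nonpos_left sq_le hν]
    exact le_add_of_nonneg_right (by positivity)

variable {ι : Type*} [Fintype ι] [DecidableEq ι]

theorem exp_mul_complProdSum_le (hν : ν ≤ 0) (hs : 0 ≤ s) (ht : 0 ≤ t) (T : Finset ι)
    {i j : ι} (hij : i ≠ j) (n : ι → ℕ) :
    Real.exp (ν * complProdSum T n) ≤ {n | complProdSum T n = 0}.indicator 1 n +
      (Real.exp (ν * t ^ 2) +
        Real.exp (s * t) * (Real.exp (ν * n i) * Real.exp (-s * n j) +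
          Real.exp (ν * n j) * Real.exp (-s * n i))) := by
  by_cases hn : complProdSum T n = 0
  · simp only [Set.indicator, Set.mem_ofPred_eq, hn, Nat.cast_zero, mul_zero, Real.exp_zero,
      if_true, Pi.one_apply]
    exact le_add_of_nonneg_right (by positivity)
  · simp only [Set.indicator, Set.mem_ofPred_eq, hn, if_false, zero_add]
    exact exp_mul_le_of_mul_le hν hs ht (mod_cast le_complProdSum hn i)
      (mod_cast le_complProdSum hn j) (mod_cast mul_le_complProdSum hn hij)

theorem indicator_complProdSum_le_exp_mul (ν : ℝ) (T : Finset ι) (n : ι → ℕ) :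
    {n | complProdSum T n = 0}.indicator 1 n ≤ Real.exp (ν * complProdSum T n) :=
  Set.indicator_apply_le' (fun hn => by simp [Set.mem_ofPred_eq.mp hn]) fun _ => (Real.exp_pos _).le

end PointwiseBound

theorem integral_exp_mul_poissonMeasure (a : ℝ≥0) (θ : ℝ) :
    ∫ n, Real.exp (θ * n) ∂poissonMeasure a = Real.exp (a * (Real.exp θ - 1)) := by
  have summand_eq (n : ℕ) : (Real.exp (-a) * a ^ n / n.factorial) • Real.exp (θ * n) =
      Real.exp (-a) * ((a * Real.exp θ) ^ n / n.factorial) := by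
    rw [smul_eq_mul, mul_comm θ, Real.exp_nat_mul, mul_pow]
    ring
  simp only [integral_poissonMeasure, summand_eq, tsum_mul_left]
  rw [← congrFun NormedSpace.exp_eq_tsum_div, ← Real.exp_eq_exp_ℝ, ← Real.exp_add]
  ring_nf

section PoissonPi

variable {ι : Type*} [Fintype ι]

variable (ι) in
/-- The law of a family of independent Poisson variables of parameter `a` indexed by `ι`. -/
noncomputable abbrev poissonPi (a : ℝ≥0) : Measure (ι → ℕ) :=
  Measure.pi fun _ => poissonMeasure a

theorem poissonPi_real_singleton (a : ℝ≥0) (n : ι → ℕ) :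
    (poissonPi ι a).real {n} =
      Real.exp (-a * Fintype.card ι) * ∏ i, (a : ℝ) ^ n i / (n i).factorial := by
  simp only [measureReal_def, Measure.pi_singleton, ENNReal.toReal_prod]
  simp only [← measureReal_def, poissonMeasure_real_singleton, mul_div_assoc, prod_mul_distrib,
    prod_const, card_univ, ← Real.exp_nat_mul]
  rw [mul_comm (Fintype.card ι : ℝ)]

theorem integral_poissonPi {a : ℝ≥0} {f : (ι → ℕ) → ℝ} (hf : Integrable f (poissonPi ι a)) :
    ∫ n, f n ∂poissonPi ι a =
      Real.exp (-a * Fintype.card ι) * ∑' n, (∏ i, (a : ℝ) ^ n i / (n i).factorial) * f n := by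
  simp only [integral_countable hf, poissonPi_real_singleton, smul_eq_mul, mul_assoc,
    tsum_mul_left]

theorem poissonPi_real_forall_ne_zero (a : ℝ≥0) (S : Finset ι) :
    (poissonPi ι a).real {n | ∀ i ∈ S, n i ≠ 0} = (1 - Real.exp (-a)) ^ #S := by
  classical
  have eq_pi : {n : ι → ℕ | ∀ i ∈ S, n i ≠ 0} =
      Set.univ.pi fun i => if i ∈ S then {0}ᶜ else Set.univ := by
    ext n
    simp only [Set.mem_ofPred_eq, Set.mem_univ_pi]
    exact forall_congr' fun i => by split_ifs <;> simp_all
  have marginal (i : ι) : (poissonMeasure a).real (if i ∈ S then {0}ᶜ else Set.univ) =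
      if i ∈ S then 1 - Real.exp (-a) else 1 := by
    split_ifs
    · simp [probReal_compl_eq_one_sub, poissonMeasure_real_singleton]
    · exact probReal_univ
  rw [eq_pi, measureReal_def, Measure.pi_pi, ENNReal.toReal_prod]
  simp only [← measureReal_def, marginal, prod_ite_mem, univ_inter, prod_const]

theorem integral_exp_mul_mul_exp_mul_poissonPi (a : ℝ≥0) (θ η : ℝ) {i j : ι} (hij : i ≠ j) :
    ∫ n, Real.exp (θ * n i) * Real.exp (η * n j) ∂poissonPi ι a =
      Real.exp (a * (Real.exp θ + Real.exp η - 2)) := by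
  have marginal (θ : ℝ) (i : ι) :
      ∫ n, Real.exp (θ * n i) ∂poissonPi ι a = Real.exp (a * (Real.exp θ - 1)) := by
    rw [← integral_exp_mul_poissonMeasure]
    exact integral_comp_eval (μ := fun _ : ι => poissonMeasure a)
      (f := fun m : ℕ => Real.exp (θ * m)) .of_discrete
  have indep : (fun n : ι → ℕ => n i) ⟂ᵢ[poissonPi ι a] (fun n => n j) :=
    (iIndepFun_pi (X := fun _ m => m) fun _ => aemeasurable_id).indepFun hij
  rw [indep.integral_fun_comp_mul_comp (f := fun m : ℕ => Real.exp (θ * m))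
    (g := fun m : ℕ => Real.exp (η * m)) .of_discrete .of_discrete .of_discrete .of_discrete,
    marginal, marginal, ← Real.exp_add]
  ring_nf

theorem integrable_exp_mul_poissonPi {θ : ℝ} (hθ : θ ≤ 0) (a : ℝ≥0) (f : (ι → ℕ) → ℕ) :
    Integrable (fun n => Real.exp (θ * f n)) (poissonPi ι a) := by
  refine .of_bound .of_discrete 1 (ae_of_all _ fun n => ?_)
  rw [Real.norm_of_nonneg (Real.exp_pos _).le, Real.exp_le_one_iff]
  exact mul_nonpos_of_nonpos_of_nonneg hθ (Nat.cast_nonneg _)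

theorem integrable_exp_mul_mul_exp_mul_poissonPi {θ η : ℝ} (hθ : θ ≤ 0) (hη : η ≤ 0) (a : ℝ≥0)
    (i j : ι) :
    Integrable (fun n => Real.exp (θ * n i) * Real.exp (η * n j)) (poissonPi ι a) :=
  (integrable_exp_mul_poissonPi hη a (· j)).bdd_mul (c := 1) .of_discrete (ae_of_all _ fun n => by
    rw [Real.norm_of_nonneg (Real.exp_pos _).le, Real.exp_le_one_iff]
    exact mul_nonpos_of_nonpos_of_nonneg hθ (Nat.cast_nonneg _))

variable [DecidableEq ι]

theorem poissonPi_real_complProdSum_eq_zero (a : ℝ≥0) (T : Finset ι) :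
    (poissonPi ι a).real {n | complProdSum T n = 0} = 1 - (1 - Real.exp (-a)) ^ #Tᶜ := by
  have compl_eq : {n : ι → ℕ | complProdSum T n = 0}ᶜ = {n | ∀ i ∈ Tᶜ, n i ≠ 0} := by
    ext n
    exact complProdSum_ne_zero_iff
  rw [← poissonPi_real_forall_ne_zero, ← compl_eq, probReal_compl_eq_one_sub .of_discrete,
    sub_sub_cancel]

theorem le_integral_exp_mul_complProdSum {ν : ℝ} (hν : ν ≤ 0) (a : ℝ≥0) (T : Finset ι) :
    1 - (1 - Real.exp (-a)) ^ #Tᶜ ≤ ∫ n, Real.exp (ν * complProdSum T n) ∂poissonPi ι a := by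
  rw [← poissonPi_real_complProdSum_eq_zero, ← integral_indicator_one .of_discrete]
  exact integral_mono ((integrable_const 1).indicator .of_discrete)
    (integrable_exp_mul_poissonPi hν a _) (indicator_complProdSum_le_exp_mul ν T)

theorem integral_exp_mul_complProdSum_le [Nontrivial ι] {ν s t : ℝ} (hν : ν ≤ 0) (hs : 0 ≤ s)
    (ht : 0 ≤ t) (a : ℝ≥0) (T : Finset ι) :
    ∫ n, Real.exp (ν * complProdSum T n) ∂poissonPi ι a ≤
      1 - (1 - Real.exp (-a)) ^ #Tᶜ + (Real.exp (ν * t ^ 2) +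
        2 * (Real.exp (s * t) * Real.exp (a * (Real.exp ν + Real.exp (-s) - 2)))) := by
  obtain ⟨i, j, hij⟩ := exists_pair_ne ι
  have int_zero : Integrable ({n | complProdSum T n = 0}.indicator (1 : (ι → ℕ) → ℝ))
      (poissonPi ι a) := (integrable_const 1).indicator .of_discrete
  have int_pair (i j : ι) := integrable_exp_mul_mul_exp_mul_poissonPi hν (neg_nonpos.2 hs) a i j
  have int_pairs := ((int_pair i j).fun_add (int_pair j i)).const_mul (Real.exp (s * t))
  refine (integral_mono (integrable_exp_mul_poissonPi hν a _)
    (int_zero.fun_add ((integrable_const _).fun_add int_pairs))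
    (exp_mul_complProdSum_le hν hs ht T hij)).trans_eq ?_
  rw [integral_add int_zero ((integrable_const _).fun_add int_pairs),
    integral_add (integrable_const _) int_pairs, integral_const_mul,
    integral_add (int_pair i j) (int_pair j i), integral_indicator_one .of_discrete,
    poissonPi_real_complProdSum_eq_zero, integral_exp_mul_mul_exp_mul_poissonPi a _ _ hij,
    integral_exp_mul_mul_exp_mul_poissonPi a _ _ hij.symm, integral_const, probReal_univ, one_smul]
  ring

end PoissonPi

section Limits

theorem tendsto_exp_mul_one_sub_one_sub_exp_neg_pow (k : ℕ) :
    Tendsto (fun a : ℝ => Real.exp a * (1 - (1 - Real.exp (-a)) ^ k)) atTop (𝓝 k) := by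
  have eq_geom_sum (a : ℝ) : Real.exp a * (1 - (1 - Real.exp (-a)) ^ k) =
      ∑ j ∈ range k, (1 - Real.exp (-a)) ^ j := by
    rw [← mul_neg_geom_sum, sub_sub_cancel, ← mul_assoc, ← Real.exp_add, add_neg_cancel,
      Real.exp_zero, one_mul]
  simp only [eq_geom_sum]
  simpa using tendsto_finsetSum (range k) fun j _ =>
    (Real.tendsto_exp_neg_atTop_nhds_zero.const_sub 1).pow j

theorem exists_add_exp_neg_add_mul_lt_one {c : ℝ} (hc : c < 1) :
    ∃ s > 0, ∃ δ > 0, c + Real.exp (-s) + s * δ < 1 := by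
  obtain ⟨s, exp_lt, hs⟩ := ((Real.tendsto_exp_neg_atTop_nhds_zero.eventually_lt_const
    (sub_pos.2 hc)).and (eventually_gt_atTop 0)).exists
  refine ⟨s, hs, (1 - c - Real.exp (-s)) / (2 * s), div_pos (by linarith) (by linarith), ?_⟩
  rw [show s * ((1 - c - Real.exp (-s)) / (2 * s)) = (1 - c - Real.exp (-s)) / 2 by field_simp]
  linarith

theorem tendsto_exp_mul_exp_mul_sq {c : ℝ} (hc : c < 0) :
    Tendsto (fun a : ℝ => Real.exp a * Real.exp (c * a ^ 2)) atTop (𝓝 0) := by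
  have exponent (a : ℝ) : a + c * a ^ 2 = a * (1 + c * a) := by ring
  simp only [← Real.exp_add, exponent]
  exact Real.tendsto_exp_atBot.comp <| tendsto_id.atTop_mul_atBot₀ <|
    tendsto_atBot_add_const_left _ _ <| tendsto_id.const_mul_atTop_of_neg hc

theorem tendsto_exp_mul_exp_sq_add_exp_linear {ν s δ : ℝ} (hν : ν < 0) (hδ : 0 < δ)
    (hsδ : Real.exp ν + Real.exp (-s) + s * δ < 1) :
    Tendsto (fun a : ℝ => Real.exp a * (Real.exp (ν * (δ * a) ^ 2) +
      2 * (Real.exp (s * (δ * a)) * Real.exp (a * (Real.exp ν + Real.exp (-s) - 2)))))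
      atTop (𝓝 0) := by
  have sum_eq (a : ℝ) : Real.exp a * (Real.exp (ν * (δ * a) ^ 2) +
      2 * (Real.exp (s * (δ * a)) * Real.exp (a * (Real.exp ν + Real.exp (-s) - 2)))) =
      Real.exp a * Real.exp (ν * δ ^ 2 * a ^ 2) +
        2 * Real.exp (a * (Real.exp ν + Real.exp (-s) + s * δ - 1)) := by
    rw [mul_add, mul_left_comm _ 2, ← Real.exp_add (s * _), ← Real.exp_add a (_ + _)]
    ring_nf
  simp only [sum_eq]
  have large := tendsto_exp_mul_exp_mul_sq (mul_neg_of_neg_of_pos hν (pow_pos hδ 2))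
  have small : Tendsto (fun a : ℝ => Real.exp (a * (Real.exp ν + Real.exp (-s) + s * δ - 1)))
      atTop (𝓝 0) :=
    Real.tendsto_exp_atBot.comp (tendsto_id.atTop_mul_const_of_neg (sub_neg.2 hsδ))
  simpa using large.add (small.const_mul 2)

end Limits

theorem numerator_series_limit_general {ι : Type*} [Fintype ι] [DecidableEq ι] [Nontrivial ι]
    (T : Finset ι) {ν : ℝ} (hν : ν < 0) :
    Tendsto (fun a : ℝ => Real.exp (-a * (Fintype.card ι - 1)) *
      ∑' n : ι → ℕ, (∏ i, a ^ n i / (n i).factorial) * Real.exp (ν * complProdSum T n))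
      atTop (𝓝 (#Tᶜ : ℝ)) := by
  obtain ⟨s, hs, δ, hδ, hsδ⟩ := exists_add_exp_neg_add_mul_lt_one (Real.exp_lt_one_iff.2 hν)
  have eq_expectation (a : ℝ≥0) : Real.exp (-a * (Fintype.card ι - 1)) *
      ∑' n : ι → ℕ, (∏ i, (a : ℝ) ^ n i / (n i).factorial) * Real.exp (ν * complProdSum T n) =
      Real.exp a * ∫ n, Real.exp (ν * complProdSum T n) ∂poissonPi ι a := by
    rw [integral_poissonPi (integrable_exp_mul_poissonPi hν.le a _), ← mul_assoc, ← Real.exp_add]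
    ring_nf
  have lower := tendsto_exp_mul_one_sub_one_sub_exp_neg_pow #Tᶜ
  have upper := lower.add (tendsto_exp_mul_exp_sq_add_exp_linear hν hδ hsδ)
  rw [add_zero] at upper
  refine tendsto_of_tendsto_of_tendsto_of_le_of_le' lower upper ?_ ?_ <;>
    filter_upwards [eventually_ge_atTop 0] with a ha <;> lift a to ℝ≥0 using ha <;>
    rw [eq_expectation]
  · grw [le_integral_exp_mul_complProdSum hν.le]
  · grw [integral_exp_mul_complProdSum_le hν.le hs.le (by positivity : 0 ≤ δ * a), mul_add]

/-- `e^{-a(d-1)} Σ_{n∈ℕ^d} (Π a^{n_i}/n_i!) exp(ν Q_{d-k,d}(n)) → k`,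
where `Q_{d-k,d}(n) = Σ_{F⊆{1,…,d-k}} Π_{l∈{1,…,d}∖F} n_l`. -/
theorem numerator_series_limit
    (d k : ℕ) (hd : 3 ≤ d) (hk1 : 1 ≤ k) (hk2 : k ≤ d - 1) (ν : ℝ) (hν : ν < 0) :
    Tendsto (fun a : ℝ =>
        Real.exp (-a * ((d : ℝ) - 1)) *
          ∑' n : Fin d → ℕ,
            (∏ i, a ^ (n i) / ((n i).factorial : ℝ)) *
              Real.exp (ν *
                ∑ F ∈ (Finset.univ.filter (fun i : Fin d => (i : ℕ) < d - k)).powerset,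
                  ∏ l ∈ Finset.univ \ F, (n l : ℝ)))
      atTop (nhds (k : ℝ)) := by
  have : Nontrivial (Fin d) := Fin.nontrivial_iff_two_le.2 (by omega)
  have card_compl_eq : #({i : Fin d | (i : ℕ) < d - k} : Finset (Fin d))ᶜ = k := by
    rw [card_compl, Fin.card_filter_val_lt, Fintype.card_fin]
    omega
  simpa only [complProdSum, Nat.cast_sum, Nat.cast_prod, Fintype.card_fin, card_compl_eq] using
    numerator_series_limit_general ({i : Fin d | (i : ℕ) < d - k} : Finset (Fin d)) hν
end
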